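/- Let ρ_AB, ρ_BC, ρ_AC be three compatible fully classical bipartite states (i.e., there exists a tripartite density matrix ρ_ABC with these as its two-body reductions). If the operators ρ_AB ⊗ I_C, ρ_AC ⊗ I_B, ρ_BC ⊗ I_A pairwise commute, then there exists a fully classical tripartite state with reductions ρ_AB, ρ_BC, ρ_AC. In particular, one can take σ_ABC = Σ_{ijk} |a_i b_j c_k⟩⟨a_i b_j c_k| ρ_ABC |a_i b_j c_k⟩⟨a_i b_j c_k| for a suitable common product basis. -/

import Mathlib

open Matrix BigOperators
open scoped Kronecker ComplexOrder

namespace QMarginal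

abbrev Mat (n : ℕ) := Matrix (Fin n) (Fin n) ℂ
abbrev Bip (m n : ℕ) := Matrix (Fin m × Fin n) (Fin m × Fin n) ℂ
abbrev Tri (dA dB dC : ℕ) := Matrix (Fin dA × Fin dB × Fin dC) (Fin dA × Fin dB × Fin dC) ℂ

/-- partial trace over the third system -/
noncomputable def trC {dA dB dC : ℕ} (ρ : Tri dA dB dC) : Bip dA dB :=
  fun x y => ∑ c : Fin dC, ρ (x.1, x.2, c) (y.1, y.2, c)

/-- partial trace over the second system -/
noncomputable def trB {dA dB dC : ℕ} (ρ : Tri dA dB dC) : Bip dA dC :=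
  fun x y => ∑ b : Fin dB, ρ (x.1, b, x.2) (y.1, b, y.2)

/-- partial trace over the first system -/
noncomputable def trA {dA dB dC : ℕ} (ρ : Tri dA dB dC) : Bip dB dC :=
  fun x y => ∑ a : Fin dA, ρ (a, x.1, x.2) (a, y.1, y.2)

/-- partial trace of a bipartite matrix over the right factor -/
noncomputable def trR {m n : ℕ} (ρ : Bip m n) : Mat m :=
  fun i j => ∑ b : Fin n, ρ (i, b) (j, b)

/-- partial trace of a bipartite matrix over the left factor -/
noncomputable def trL {m n : ℕ} (ρ : Bip m n) : Mat n :=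
  fun i j => ∑ a : Fin m, ρ (a, i) (a, j)

def IsDensity {ι : Type*} [Fintype ι] [DecidableEq ι] (ρ : Matrix ι ι ℂ) : Prop :=
  ρ.PosSemidef ∧ ρ.trace = 1

/-- rank-one projector onto a vector -/
def projV {ι : Type*} (v : ι → ℂ) : Matrix ι ι ℂ := fun i j => v i * star (v j)

def prod2 {m n : ℕ} (v : Fin m → ℂ) (w : Fin n → ℂ) : Fin m × Fin n → ℂ :=
  fun x => v x.1 * w x.2

def prod3 {dA dB dC : ℕ} (u : Fin dA → ℂ) (v : Fin dB → ℂ) (w : Fin dC → ℂ) :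
    Fin dA × Fin dB × Fin dC → ℂ :=
  fun x => u x.1 * v x.2.1 * w x.2.2

/-- a family of vectors forming an orthonormal basis -/
def ONB {n : ℕ} (a : Fin n → Fin n → ℂ) : Prop :=
  ∀ i j, (∑ k, star (a i k) * a j k) = if i = j then (1:ℂ) else 0

/-- fully classical bipartite state -/
def FullyClassical {m n : ℕ} (ρ : Bip m n) : Prop :=
  ∃ (a : Fin m → Fin m → ℂ) (b : Fin n → Fin n → ℂ) (p : Fin m → Fin n → ℝ),
    ONB a ∧ ONB b ∧ (∀ i j, 0 ≤ p i j) ∧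
    ρ = ∑ i, ∑ j, (p i j) • projV (prod2 (a i) (b j))

/-- fully classical tripartite state -/
def FullyClassicalTri {dA dB dC : ℕ} (ρ : Tri dA dB dC) : Prop :=
  ∃ (a : Fin dA → Fin dA → ℂ) (b : Fin dB → Fin dB → ℂ) (c : Fin dC → Fin dC → ℂ)
    (f : Fin dA → Fin dB → Fin dC → ℝ),
    ONB a ∧ ONB b ∧ ONB c ∧ (∀ i j k, 0 ≤ f i j k) ∧
    ρ = ∑ i, ∑ j, ∑ k, (f i j k) • projV (prod3 (a i) (b j) (c k))

/-- fully separable tripartite state -/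
def FullySepTri {dA dB dC : ℕ} (ρ : Tri dA dB dC) : Prop :=
  ∃ (N : ℕ) (p : Fin N → ℝ) (u : Fin N → Fin dA → ℂ) (v : Fin N → Fin dB → ℂ)
    (w : Fin N → Fin dC → ℂ),
    (∀ i, 0 ≤ p i) ∧ ρ = ∑ i, (p i) • projV (prod3 (u i) (v i) (w i))

/-- M ⊗ I_C on the tripartite space, M acting on A ⊗ B -/
def embAB {dA dB : ℕ} (M : Bip dA dB) (dC : ℕ) : Tri dA dB dC :=
  fun x y => M (x.1, x.2.1) (y.1, y.2.1) * (if x.2.2 = y.2.2 then 1 else 0)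

/-- M ⊗ I_B on the tripartite space, M acting on A ⊗ C -/
def embAC {dA dC : ℕ} (M : Bip dA dC) (dB : ℕ) : Tri dA dB dC :=
  fun x y => M (x.1, x.2.2) (y.1, y.2.2) * (if x.2.1 = y.2.1 then 1 else 0)

/-- M ⊗ I_A on the tripartite space, M acting on B ⊗ C -/
def embBC {dB dC : ℕ} (M : Bip dB dC) (dA : ℕ) : Tri dA dB dC :=
  fun x y => M (x.2.1, x.2.2) (y.2.1, y.2.2) * (if x.1 = y.1 then 1 else 0)

/-- The matrix whose columns are the vectors of the family `a`. -/
def colMatrix {n : ℕ} (a : Fin n → Fin n → ℂ) : Mat n := Matrix.of fun x i => a i x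

lemma ONB.conjTranspose_mul {n : ℕ} {a : Fin n → Fin n → ℂ} (h : ONB a) :
    (colMatrix a)ᴴ * colMatrix a = 1 := by
  ext i j
  simpa [Matrix.mul_apply, colMatrix, Matrix.one_apply] using h i j

lemma ONB.mul_conjTranspose {n : ℕ} {a : Fin n → Fin n → ℂ} (h : ONB a) :
    colMatrix a * (colMatrix a)ᴴ = 1 :=
  mul_eq_one_comm.mp h.conjTranspose_mul

/-- Pairwise commuting Hermitian matrices have a common orthonormal eigenbasis. -/
lemma exists_ONB_mulVec_of_isHermitian {n : ℕ} {ι : Type*} (T : ι → Mat n)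
    (hT : ∀ i, (T i).IsHermitian) (hC : ∀ i j, Commute (T i) (T j)) :
    ∃ a : Fin n → Fin n → ℂ, ONB a ∧ ∀ k i, ∃ μ : ℂ, T k *ᵥ a i = μ • a i := by
  classical
  let L : ι → EuclideanSpace ℂ (Fin n) →ₗ[ℂ] EuclideanSpace ℂ (Fin n) :=
    fun i => (T i).toEuclideanLin
  have hL : ∀ i, (L i).IsSymmetric := fun i => isSymmetric_toEuclideanLin_iff.mpr (hT i)
  have hLC : Pairwise (Function.onFun Commute L) := fun i j _ => by
    have h := hC i j
    simp only [Function.onFun, Commute, SemiconjBy, L, Matrix.toEuclideanLin] at h ⊢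
    change Matrix.toLpLin 2 2 (T i) ∘ₗ Matrix.toLpLin 2 2 (T j)
      = Matrix.toLpLin 2 2 (T j) ∘ₗ Matrix.toLpLin 2 2 (T i)
    rw [← Matrix.toLpLin_mul, ← Matrix.toLpLin_mul, h]
  have hint := LinearMap.IsSymmetric.directSum_isInternal_of_pairwise_commute hL hLC
  have hort := LinearMap.IsSymmetric.orthogonalFamily_iInf_eigenspaces hL
  let b := hint.collectedBasis fun χ => (stdOrthonormalBasis ℂ _).toBasis
  have hb : Orthonormal ℂ b :=
    DirectSum.IsInternal.collectedBasis_orthonormal hort hint fun χ => by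
      simp [OrthonormalBasis.orthonormal]
  have hmem : ∀ x, b x ∈ ⨅ j, Module.End.eigenspace (L j) (x.1 j) := fun x =>
    hint.collectedBasis_mem _ x
  have := Module.Finite.finite_basis b
  have := Fintype.ofFinite
    ((χ : ι → ℂ) × Fin (Module.finrank ℂ ↥(⨅ j, Module.End.eigenspace (L j) (χ j))))
  have hcard := Module.finrank_eq_card_basis b
  rw [finrank_euclideanSpace_fin] at hcard
  let e := Fintype.equivFinOfCardEq hcard.symm
  refine ⟨fun i => (b (e.symm i)).ofLp, fun i j => ?_, fun k i => ⟨(e.symm i).1 k, ?_⟩⟩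
  · have h := orthonormal_iff_ite.mp hb (e.symm i) (e.symm j)
    simp only [EmbeddingLike.apply_eq_iff_eq, PiLp.inner_apply, RCLike.inner_apply] at h
    rw [← h]
    exact Finset.sum_congr rfl fun k _ => mul_comm _ _
  · have h := Module.End.mem_eigenspace_iff.mp ((Submodule.mem_iInf _).mp (hmem (e.symm i)) k)
    simpa [L] using congrArg WithLp.ofLp h

/-- A family of matrices that pairwise commute and commute with the adjoints of one another is
simultaneously diagonal in some orthonormal basis. -/
lemma exists_ONB_isDiag {n : ℕ} {ι : Type*} (S : ι → Mat n)
    (hC : ∀ i j, Commute (S i) (S j)) (hCs : ∀ i j, Commute (S i) (S j)ᴴ) :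
    ∃ a : Fin n → Fin n → ℂ, ONB a ∧
      ∀ k, ((colMatrix a)ᴴ * S k * colMatrix a).IsDiag := by
  have hss : ∀ i j, Commute (S i)ᴴ (S j)ᴴ := fun i j => by
    have h := congrArg conjTranspose (hC j i).eq
    simpa [Commute, SemiconjBy] using h
  have hpm : ∀ i j, Commute (S i + (S i)ᴴ) (Complex.I • (S j - (S j)ᴴ)) := fun i j =>
    (((hC i j).sub_right (hCs i j)).add_left
      ((hCs j i).symm.sub_right (hss i j))).smul_right _
  obtain ⟨a, ha, hev⟩ := exists_ONB_mulVec_of_isHermitian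
    (Sum.elim (fun i => S i + (S i)ᴴ) (fun i => Complex.I • (S i - (S i)ᴴ)))
    (by
      rintro (i | i)
      · simp [IsHermitian, add_comm]
      · simp [IsHermitian, ← smul_neg])
    (by
      rintro (i | i) (j | j)
      · exact ((hC i j).add_right (hCs i j)).add_left ((hCs j i).symm.add_right (hss i j))
      · exact hpm i j
      · exact (hpm j i).symm
      · exact ((((hC i j).sub_right (hCs i j)).sub_left
          ((hCs j i).symm.sub_right (hss i j))).smul_right _).smul_left _)
  refine ⟨a, ha, fun k i j hij => ?_⟩
  obtain ⟨μ, hμ⟩ := hev (Sum.inl k) j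
  obtain ⟨ν, hν⟩ := hev (Sum.inr k) j
  have hS : S k = (1 / 2 : ℂ) • (S k + (S k)ᴴ)
      - (Complex.I / 2) • (Complex.I • (S k - (S k)ᴴ)) := by
    ext x y
    simp only [Matrix.sub_apply, Matrix.smul_apply, Matrix.add_apply, smul_eq_mul]
    linear_combination (1 / 2 * (S k x y - (S k)ᴴ x y)) * Complex.I_mul_I
  have hev' : S k *ᵥ a j = (μ / 2 - Complex.I / 2 * ν) • a j := by
    simp only [Sum.elim_inl, Sum.elim_inr] at hμ hν
    rw [hS, sub_mulVec, smul_mulVec, hμ, smul_mulVec, hν, smul_smul, smul_smul, ← sub_smul]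
    congr 1
    ring
  have hentry : ((colMatrix a)ᴴ * S k * colMatrix a) i j = star (a i) ⬝ᵥ (S k *ᵥ a j) := by
    rw [Matrix.mul_assoc]
    rfl
  rw [hentry, hev', dotProduct_smul]
  have h := ha i j
  rw [if_neg hij] at h
  have h0 : star (a i) ⬝ᵥ a j = 0 := h
  rw [h0, smul_zero]

/-- The block of a bipartite matrix acting on the left factor. -/
def leftBlock {m n : ℕ} (ρ : Bip m n) (b b' : Fin n) : Mat m := fun x y => ρ (x, b) (y, b')

/-- Exchange of the two factors. -/
def flip {m n : ℕ} (ρ : Bip m n) : Bip n m := ρ.submatrix Prod.swap Prod.swap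

lemma FullyClassical.flip {m n : ℕ} {ρ : Bip m n} (h : FullyClassical ρ) :
    FullyClassical (flip ρ) := by
  obtain ⟨a, b, p, ha, hb, hp, rfl⟩ := h
  refine ⟨b, a, fun j i => p i j, hb, ha, fun j i => hp i j, ?_⟩
  rw [Finset.sum_comm]
  ext x y
  simp [QMarginal.flip, Matrix.sum_apply, projV, prod2, mul_comm]

lemma FullyClassical.isHermitian {m n : ℕ} {ρ : Bip m n} (h : FullyClassical ρ) :
    ρ.IsHermitian := by
  obtain ⟨a, b, p, -, -, -, rfl⟩ := h
  ext x y
  simp [Matrix.sum_apply, projV, prod2, mul_comm]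

lemma FullyClassical.leftBlock_conjTranspose {m n : ℕ} {ρ : Bip m n} (h : FullyClassical ρ)
    (b b' : Fin n) : (leftBlock ρ b b')ᴴ = leftBlock ρ b' b := by
  ext x y
  exact h.isHermitian.apply _ _

lemma FullyClassical.leftBlock_commute {m n : ℕ} {ρ : Bip m n} (h : FullyClassical ρ)
    (b₁ b₂ b₃ b₄ : Fin n) : Commute (leftBlock ρ b₁ b₂) (leftBlock ρ b₃ b₄) := by
  obtain ⟨a, b, p, ha, -, -, rfl⟩ := h
  have key : ∀ c c', leftBlock (∑ i, ∑ j, (p i j) • projV (prod2 (a i) (b j))) c c'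
      = colMatrix a * diagonal (fun i => ∑ j, (p i j : ℂ) * (b j c * star (b j c')))
        * (colMatrix a)ᴴ := fun c c' => by
    ext x y
    rw [Matrix.mul_apply]
    simp only [leftBlock, Matrix.sum_apply, Matrix.smul_apply, projV, prod2, mul_diagonal,
      colMatrix, of_apply, conjTranspose_apply, Finset.mul_sum, Finset.sum_mul]
    refine Finset.sum_congr rfl fun i _ => Finset.sum_congr rfl fun j _ => ?_
    simp only [star_mul', Complex.real_smul]
    ring
  have mul : ∀ d d' : Fin m → ℂ,
      colMatrix a * diagonal d * (colMatrix a)ᴴ * (colMatrix a * diagonal d' * (colMatrix a)ᴴ)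
        = colMatrix a * diagonal (fun i => d i * d' i) * (colMatrix a)ᴴ := fun d d' => by
    rw [← diagonal_mul_diagonal]
    calc _ = colMatrix a * diagonal d * ((colMatrix a)ᴴ * colMatrix a) * diagonal d'
          * (colMatrix a)ᴴ := by simp only [Matrix.mul_assoc]
      _ = _ := by rw [ha.conjTranspose_mul]; simp only [Matrix.mul_assoc, Matrix.one_mul]
  rw [key, key, Commute, SemiconjBy, mul, mul]
  simp only [mul_comm]

/-- Two fully classical states sharing their left factor, with commuting blocks, have a common
orthonormal basis of that factor in which all blocks are diagonal. -/
lemma exists_ONB_isDiag_leftBlock {m n l : ℕ} {ρ : Bip m n} {τ : Bip m l}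
    (hρ : FullyClassical ρ) (hτ : FullyClassical τ)
    (h : ∀ b b' c c', Commute (leftBlock ρ b b') (leftBlock τ c c')) :
    ∃ a : Fin m → Fin m → ℂ, ONB a ∧
      (∀ b b', ((colMatrix a)ᴴ * leftBlock ρ b b' * colMatrix a).IsDiag) ∧
      (∀ c c', ((colMatrix a)ᴴ * leftBlock τ c c' * colMatrix a).IsDiag) := by
  obtain ⟨a, ha, hd⟩ := exists_ONB_isDiag
    (Sum.elim (fun x : Fin n × Fin n => leftBlock ρ x.1 x.2)
      (fun x : Fin l × Fin l => leftBlock τ x.1 x.2))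
    (by
      rintro (i | i) (j | j)
      · exact hρ.leftBlock_commute _ _ _ _
      · exact h _ _ _ _
      · exact (h _ _ _ _).symm
      · exact hτ.leftBlock_commute _ _ _ _)
    (by
      rintro (i | i) (j | j) <;>
        simp only [Sum.elim_inl, Sum.elim_inr, hρ.leftBlock_conjTranspose,
          hτ.leftBlock_conjTranspose]
      · exact hρ.leftBlock_commute _ _ _ _
      · exact h _ _ _ _
      · exact (h _ _ _ _).symm
      · exact hτ.leftBlock_commute _ _ _ _)
  exact ⟨a, ha, fun b b' => hd (Sum.inl (b, b')), fun c c' => hd (Sum.inr (c, c'))⟩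

lemma kronecker_conj_apply {m n : ℕ} (U : Mat m) (V : Mat n) (ρ : Bip m n)
    (x y : Fin m × Fin n) :
    ((U ⊗ₖ V)ᴴ * ρ * (U ⊗ₖ V)) x y
      = ∑ b, ∑ b', star (V b x.2) * V b' y.2 * (Uᴴ * leftBlock ρ b b' * U) x.1 y.1 := by
  simp only [Matrix.mul_apply, Fintype.sum_prod_type, conjTranspose_apply, kroneckerMap_apply,
    leftBlock, Finset.mul_sum, Finset.sum_mul, star_mul']
  rw [Finset.sum_comm]
  conv_lhs => enter [2, b']; rw [Finset.sum_congr rfl fun _ _ => Finset.sum_comm]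
  conv_lhs => enter [2, b']; rw [Finset.sum_comm]
  rw [Finset.sum_comm]
  refine Finset.sum_congr rfl fun b _ => Finset.sum_congr rfl fun b' _ =>
    Finset.sum_congr rfl fun a' _ => Finset.sum_congr rfl fun a _ => ?_
  ring

lemma flip_kronecker_conj_apply {m n : ℕ} (U : Mat m) (V : Mat n) (ρ : Bip m n)
    (x y : Fin m × Fin n) :
    ((U ⊗ₖ V)ᴴ * ρ * (U ⊗ₖ V)) x y
      = ((V ⊗ₖ U)ᴴ * flip ρ * (V ⊗ₖ U)) x.swap y.swap := by
  have hUV : (V ⊗ₖ U) = (U ⊗ₖ V).submatrix (Equiv.prodComm _ _) (Equiv.prodComm _ _) := by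
    ext x y
    simp [mul_comm]
  have hρ : flip ρ = ρ.submatrix (Equiv.prodComm _ _) (Equiv.prodComm _ _) := rfl
  rw [hUV, hρ, conjTranspose_submatrix, submatrix_mul_equiv, submatrix_mul_equiv]
  rfl

/-- A bipartite matrix whose left and right blocks are diagonal in given bases is diagonal in the
product basis. -/
lemma isDiag_kronecker_conj {m n : ℕ} {U : Mat m} {V : Mat n} {ρ : Bip m n}
    (hU : ∀ b b', (Uᴴ * leftBlock ρ b b' * U).IsDiag)
    (hV : ∀ a a', (Vᴴ * leftBlock (flip ρ) a a' * V).IsDiag) :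
    ((U ⊗ₖ V)ᴴ * ρ * (U ⊗ₖ V)).IsDiag := by
  intro x y hxy
  by_cases h : x.1 = y.1
  · have h2 : x.2 ≠ y.2 := fun h2 => hxy (Prod.ext h h2)
    rw [flip_kronecker_conj_apply, kronecker_conj_apply]
    exact Finset.sum_eq_zero fun b _ => Finset.sum_eq_zero fun b' _ => by
      rw [hV b b' (i := x.swap.1) (j := y.swap.1) h2, mul_zero]
  · rw [kronecker_conj_apply]
    exact Finset.sum_eq_zero fun b _ => Finset.sum_eq_zero fun b' _ => by
      rw [hU b b' h, mul_zero]

section PartialTrace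

variable {κ ι : Type*} [Fintype κ] [Fintype ι]

/-- Partial trace over the right factor of a product index type. -/
def ptrace (X : Matrix (κ × ι) (κ × ι) ℂ) : Matrix κ κ ℂ :=
  fun x y => ∑ c, X (x, c) (y, c)

variable [DecidableEq ι]

lemma ptrace_kronecker_conj (K : Matrix κ κ ℂ) {W : Matrix ι ι ℂ} (hW : Wᴴ * W = 1)
    (X : Matrix (κ × ι) (κ × ι) ℂ) :
    ptrace ((K ⊗ₖ W) * X * (K ⊗ₖ W)ᴴ) = K * ptrace X * Kᴴ := by
  have hδ : ∀ k k', ∑ c, W c k * star (W c k') = if k' = k then 1 else 0 := fun k k' => by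
    have h := congrFun (congrFun hW k') k
    rw [Matrix.mul_apply, Matrix.one_apply] at h
    rw [← h]
    exact Finset.sum_congr rfl fun c _ => mul_comm _ _
  ext x y
  calc ptrace ((K ⊗ₖ W) * X * (K ⊗ₖ W)ᴴ) x y
      = ∑ c, ∑ q : κ × ι, ∑ p : κ × ι,
          K x p.1 * X p q * star (K y q.1) * (W c p.2 * star (W c q.2)) := by
        simp only [ptrace, Matrix.mul_apply, conjTranspose_apply, kroneckerMap_apply,
          Finset.sum_mul, star_mul']
        refine Finset.sum_congr rfl fun c _ => Finset.sum_congr rfl fun q _ =>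
          Finset.sum_congr rfl fun p _ => ?_
        ring
    _ = ∑ q : κ × ι, ∑ p : κ × ι,
          K x p.1 * X p q * star (K y q.1) * (if q.2 = p.2 then 1 else 0) := by
        rw [Finset.sum_comm]
        refine Finset.sum_congr rfl fun q _ => ?_
        rw [Finset.sum_comm]
        simp only [← Finset.mul_sum, hδ]
    _ = (K * ptrace X * Kᴴ) x y := by
        simp only [ptrace, Matrix.mul_apply, conjTranspose_apply, Fintype.sum_prod_type,
          Finset.sum_mul, Finset.mul_sum, mul_ite, mul_one, mul_zero, Finset.sum_ite_eq,
          Finset.mem_univ, if_true]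
        refine Finset.sum_congr rfl fun q _ => ?_
        rw [Finset.sum_comm]

/-- The pinching of `X` in the basis given by the columns of `M`. -/
def pinch {η : Type*} [Fintype η] [DecidableEq η] (M X : Matrix η η ℂ) : Matrix η η ℂ :=
  M * diagonal (diag (Mᴴ * X * M)) * Mᴴ

lemma pinch_submatrix {η θ : Type*} [Fintype η] [DecidableEq η] [Fintype θ] [DecidableEq θ]
    (e : θ ≃ η) (M X : Matrix η η ℂ) :
    (pinch M X).submatrix e e = pinch (M.submatrix e e) (X.submatrix e e) := by
  simp only [pinch, conjTranspose_submatrix, submatrix_mul_equiv]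
  rw [show diag ((Mᴴ * X * M).submatrix e e) = diag (Mᴴ * X * M) ∘ e from rfl,
    ← submatrix_diagonal_equiv, submatrix_mul_equiv, submatrix_mul_equiv]

variable [DecidableEq κ]

/-- Pinching in a product basis preserves a marginal that is diagonal in that basis. -/
lemma ptrace_pinch {K : Matrix κ κ ℂ} {W : Matrix ι ι ℂ} (hK : K * Kᴴ = 1) (hW : Wᴴ * W = 1)
    {X : Matrix (κ × ι) (κ × ι) ℂ} (hd : (Kᴴ * ptrace X * K).IsDiag) :
    ptrace (pinch (K ⊗ₖ W) X) = ptrace X := by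
  have hW' : Wᴴᴴ * Wᴴ = 1 := by rw [conjTranspose_conjTranspose]; exact mul_eq_one_comm.mp hW
  have hD := ptrace_kronecker_conj Kᴴ hW' X
  rw [← conjTranspose_kronecker, conjTranspose_conjTranspose, conjTranspose_conjTranspose] at hD
  have hdiag : ptrace (diagonal (diag ((K ⊗ₖ W)ᴴ * X * (K ⊗ₖ W)))) = Kᴴ * ptrace X * K := by
    rw [← hD] at hd ⊢
    ext x y
    by_cases h : x = y
    · subst h
      simp [ptrace]
    · rw [hd h]
      exact Finset.sum_eq_zero fun c _ => diagonal_apply_ne _ fun h' => h (congrArg Prod.fst h')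
  rw [pinch, ptrace_kronecker_conj K hW, hdiag]
  calc K * (Kᴴ * ptrace X * K) * Kᴴ = (K * Kᴴ) * ptrace X * (K * Kᴴ) := by
        simp only [Matrix.mul_assoc]
    _ = ptrace X := by rw [hK, Matrix.one_mul, Matrix.mul_one]

end PartialTrace

lemma IsDensity.pinch {η : Type*} [Fintype η] [DecidableEq η] {M ρ : Matrix η η ℂ}
    (hM : Mᴴ * M = 1) (hρ : IsDensity ρ) : IsDensity (pinch M ρ) := by
  have hM' : M * Mᴴ = 1 := mul_eq_one_comm.mp hM
  refine ⟨?_, ?_⟩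
  · refine PosSemidef.mul_mul_conjTranspose_same (PosSemidef.diagonal fun i => ?_) M
    exact (hρ.1.conjTranspose_mul_mul_same M).diag_nonneg
  · rw [QMarginal.pinch, trace_mul_comm, ← Matrix.mul_assoc, hM, Matrix.one_mul, trace_diagonal]
    change trace (Mᴴ * ρ * M) = 1
    rw [trace_mul_comm, ← Matrix.mul_assoc, hM', Matrix.one_mul, hρ.2]

lemma isUnitary_kronecker {κ ι : Type*} [Fintype κ] [Fintype ι] [DecidableEq κ] [DecidableEq ι]
    {U : Matrix κ κ ℂ} {V : Matrix ι ι ℂ} (hU : Uᴴ * U = 1) (hV : Vᴴ * V = 1) :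
    (U ⊗ₖ V)ᴴ * (U ⊗ₖ V) = 1 := by
  rw [conjTranspose_kronecker, ← mul_kronecker_mul, hU, hV, one_kronecker_one]

lemma fullyClassicalTri_pinch {dA dB dC : ℕ} {a : Fin dA → Fin dA → ℂ} {b : Fin dB → Fin dB → ℂ}
    {c : Fin dC → Fin dC → ℂ} (ha : ONB a) (hb : ONB b) (hc : ONB c) {ρ : Tri dA dB dC}
    (hρ : ρ.PosSemidef) :
    FullyClassicalTri (pinch (colMatrix a ⊗ₖ (colMatrix b ⊗ₖ colMatrix c)) ρ) := by
  set M := colMatrix a ⊗ₖ (colMatrix b ⊗ₖ colMatrix c) with hM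
  have hD : ∀ t, 0 ≤ (Mᴴ * ρ * M) t t := fun t =>
    (hρ.conjTranspose_mul_mul_same M).diag_nonneg
  refine ⟨a, b, c, fun i j k => ((Mᴴ * ρ * M) (i, j, k) (i, j, k)).re, ha, hb, hc,
    fun i j k => (Complex.nonneg_iff.mp (hD _)).1, ?_⟩
  have hre : ∀ t, (((Mᴴ * ρ * M) t t).re : ℂ) = (Mᴴ * ρ * M) t t := fun t =>
    Complex.ext rfl (Complex.nonneg_iff.mp (hD t)).2
  ext x y
  rw [pinch, Matrix.mul_apply]
  simp only [Matrix.sum_apply, Matrix.smul_apply, Complex.real_smul, hre, mul_diagonal,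
    Fintype.sum_prod_type]
  refine Finset.sum_congr rfl fun i _ => Finset.sum_congr rfl fun j _ =>
    Finset.sum_congr rfl fun k _ => ?_
  have hcol : ∀ z, M z (i, j, k) = prod3 (a i) (b j) (c k) z := fun z => by
    simp [hM, colMatrix, prod3, mul_assoc]
  rw [conjTranspose_apply, hcol, hcol, projV, diag_apply]
  ring

section Marginals

variable {dA dB dC : ℕ} {U : Mat dA} {V : Mat dB} {W : Mat dC} {ρ : Tri dA dB dC}

lemma trC_pinch (hU : Uᴴ * U = 1) (hV : Vᴴ * V = 1) (hW : Wᴴ * W = 1)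
    (hd : ((U ⊗ₖ V)ᴴ * trC ρ * (U ⊗ₖ V)).IsDiag) :
    trC (pinch (U ⊗ₖ (V ⊗ₖ W)) ρ) = trC ρ := by
  let e : (Fin dA × Fin dB) × Fin dC ≃ Fin dA × Fin dB × Fin dC := Equiv.prodAssoc _ _ _
  have htr : ∀ X : Tri dA dB dC, trC X = ptrace (X.submatrix e e) := fun X => rfl
  have hM : (U ⊗ₖ (V ⊗ₖ W)).submatrix e e = (U ⊗ₖ V) ⊗ₖ W := by
    ext x y
    simp [e, mul_assoc]
  rw [htr, htr, pinch_submatrix, hM]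
  exact ptrace_pinch (mul_eq_one_comm.mp (isUnitary_kronecker hU hV)) hW hd

lemma trB_pinch (hU : Uᴴ * U = 1) (hV : Vᴴ * V = 1) (hW : Wᴴ * W = 1)
    (hd : ((U ⊗ₖ W)ᴴ * trB ρ * (U ⊗ₖ W)).IsDiag) :
    trB (pinch (U ⊗ₖ (V ⊗ₖ W)) ρ) = trB ρ := by
  let e : (Fin dA × Fin dC) × Fin dB ≃ Fin dA × Fin dB × Fin dC :=
    (Equiv.prodAssoc _ _ _).trans ((Equiv.refl _).prodCongr (Equiv.prodComm _ _))
  have htr : ∀ X : Tri dA dB dC, trB X = ptrace (X.submatrix e e) := fun X => rfl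
  have hM : (U ⊗ₖ (V ⊗ₖ W)).submatrix e e = (U ⊗ₖ W) ⊗ₖ V := by
    ext x y
    simp [e, mul_comm, mul_left_comm]
  rw [htr, htr, pinch_submatrix, hM]
  exact ptrace_pinch (mul_eq_one_comm.mp (isUnitary_kronecker hU hW)) hV hd

lemma trA_pinch (hU : Uᴴ * U = 1) (hV : Vᴴ * V = 1) (hW : Wᴴ * W = 1)
    (hd : ((V ⊗ₖ W)ᴴ * trA ρ * (V ⊗ₖ W)).IsDiag) :
    trA (pinch (U ⊗ₖ (V ⊗ₖ W)) ρ) = trA ρ := by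
  let e : (Fin dB × Fin dC) × Fin dA ≃ Fin dA × Fin dB × Fin dC := Equiv.prodComm _ _
  have htr : ∀ X : Tri dA dB dC, trA X = ptrace (X.submatrix e e) := fun X => rfl
  have hM : (U ⊗ₖ (V ⊗ₖ W)).submatrix e e = (V ⊗ₖ W) ⊗ₖ U := by
    ext x y
    simp [e, mul_comm]
  rw [htr, htr, pinch_submatrix, hM]
  exact ptrace_pinch (mul_eq_one_comm.mp (isUnitary_kronecker hV hW)) hU hd

end Marginals

section BlockCommute

variable {dA dB dC : ℕ} {ρAB : Bip dA dB} {ρAC : Bip dA dC} {ρBC : Bip dB dC}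

lemma leftBlock_commute_of_embAB_embAC
    (h : embAB ρAB dC * embAC ρAC dB = embAC ρAC dB * embAB ρAB dC) (b b' : Fin dB)
    (c c' : Fin dC) : Commute (leftBlock ρAB b b') (leftBlock ρAC c c') := by
  ext x y
  simpa [Matrix.mul_apply, embAB, embAC, Fintype.sum_prod_type, leftBlock] using
    congrFun (congrFun h (x, b, c)) (y, b', c')

lemma leftBlock_commute_of_embAB_embBC
    (h : embAB ρAB dC * embBC ρBC dA = embBC ρBC dA * embAB ρAB dC) (a a' : Fin dA)
    (c c' : Fin dC) : Commute (leftBlock (flip ρAB) a a') (leftBlock ρBC c c') := by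
  ext x y
  simpa [Matrix.mul_apply, embAB, embBC, Fintype.sum_prod_type, leftBlock, flip] using
    congrFun (congrFun h (a, x, c)) (a', y, c')

lemma leftBlock_commute_of_embAC_embBC
    (h : embAC ρAC dB * embBC ρBC dA = embBC ρBC dA * embAC ρAC dB) (a a' : Fin dA)
    (b b' : Fin dB) : Commute (leftBlock (flip ρAC) a a') (leftBlock (flip ρBC) b b') := by
  ext x y
  simpa [Matrix.mul_apply, embAC, embBC, Fintype.sum_prod_type, leftBlock, flip] using
    congrFun (congrFun h (a, b, x)) (a', b', y)

end BlockCommute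

/-- compatible fully classical bipartite states with pairwise commuting
embeddings are compatible with a fully classical tripartite state. -/
theorem stmt_5 {dA dB dC : ℕ}
    (ρAB : Bip dA dB) (ρAC : Bip dA dC) (ρBC : Bip dB dC)
    (hfcAB : FullyClassical ρAB) (hfcAC : FullyClassical ρAC)
    (hfcBC : FullyClassical ρBC)
    (ρABC : Tri dA dB dC) (hρ : IsDensity ρABC)
    (hAB : trC ρABC = ρAB) (hAC : trB ρABC = ρAC) (hBC : trA ρABC = ρBC)
    (h1 : embAB ρAB dC * embAC ρAC dB = embAC ρAC dB * embAB ρAB dC)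
    (h2 : embAB ρAB dC * embBC ρBC dA = embBC ρBC dA * embAB ρAB dC)
    (h3 : embAC ρAC dB * embBC ρBC dA = embBC ρBC dA * embAC ρAC dB) :
    ∃ σ : Tri dA dB dC, IsDensity σ ∧ FullyClassicalTri σ ∧
      trC σ = ρAB ∧ trB σ = ρAC ∧ trA σ = ρBC := by
  obtain ⟨a, ha, haB, haC⟩ := exists_ONB_isDiag_leftBlock hfcAB hfcAC
    (leftBlock_commute_of_embAB_embAC h1)
  obtain ⟨b, hb, hbA, hbC⟩ := exists_ONB_isDiag_leftBlock hfcAB.flip hfcBC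
    (leftBlock_commute_of_embAB_embBC h2)
  obtain ⟨c, hc, hcA, hcB⟩ := exists_ONB_isDiag_leftBlock hfcAC.flip hfcBC.flip
    (leftBlock_commute_of_embAC_embBC h3)
  have hU := ha.conjTranspose_mul
  have hV := hb.conjTranspose_mul
  have hW := hc.conjTranspose_mul
  subst hAB hAC hBC
  exact ⟨pinch (colMatrix a ⊗ₖ (colMatrix b ⊗ₖ colMatrix c)) ρABC,
    hρ.pinch (isUnitary_kronecker hU (isUnitary_kronecker hV hW)),
    fullyClassicalTri_pinch ha hb hc hρ.1,
    trC_pinch hU hV hW (isDiag_kronecker_conj haB hbA),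
    trB_pinch hU hV hW (isDiag_kronecker_conj haC hcA),
    trA_pinch hU hV hW (isDiag_kronecker_conj hbC hcB)⟩
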